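/- Let (Φ₁,Φ₂) be a branching mechanism, V the unique solution of the cumulant equations (3.8), and H the moment matrix. Suppose that all eigenvalues of H have strictly negative real parts. Then there exist strictly positive constants c and c₂ such that |V(t,λ)| ≤ c·|λ|·e^{−c₂ t} for all λ ∈ [0,∞)² and all t ≥ 0, where |·| denotes the Euclidean norm on ℝ². -/

import Mathlib

open MeasureTheory Filter Set

noncomputable section

/-- The state space `𝕄 = [0,∞) × ℕ`, as a subset of `ℝ²`. -/
def Mset : Set (ℝ × ℝ) := {z | 0 ≤ z.1 ∧ ∃ n : ℕ, z.2 = (n : ℝ)}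

/-- The space `𝕄₋₁ = [0,∞) × (ℕ ∪ {-1})`, as a subset of `ℝ²`. -/
def Mm1set : Set (ℝ × ℝ) := {z | 0 ≤ z.1 ∧ ∃ n : ℤ, (-1 : ℤ) ≤ n ∧ z.2 = (n : ℝ)}

/-- The data of a branching mechanism `(Φ₁, Φ₂)` of a mixed state branching process. -/
structure BranchingMechanism where
  a11 : ℝ
  a21 : ℝ
  alpha : ℝ
  a21_nonneg : 0 ≤ a21
  alpha_nonneg : 0 ≤ alpha
  n1 : Measure (ℝ × ℝ)
  n2 : Measure (ℝ × ℝ)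
  n1_sigmaFinite : SigmaFinite n1
  n2_sigmaFinite : SigmaFinite n2
  /-- `n₁` is supported on `𝕄` -/
  n1_supp : n1 Msetᶜ = 0
  /-- `n₂` is supported on `𝕄₋₁` -/
  n2_supp : n2 Mm1setᶜ = 0
  /-- `n₁` does not charge the origin -/
  n1_zero : n1 {0} = 0
  /-- `n₂` does not charge the origin -/
  n2_zero : n2 {0} = 0
  /-- `n₂([0,∞) × {-1}) < ∞` -/
  n2_neg1 : n2 {z : ℝ × ℝ | z.2 = -1} ≠ ⊤
  /-- `∫ (z₁ ∧ z₁² + z₂) n₁(dz) < ∞` -/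
  n1_moment : ∫⁻ z, ENNReal.ofReal (min z.1 (z.1 ^ 2) + z.2) ∂n1 ≠ ⊤
  /-- `∫ (z₁ + |z₂|) n₂(dz) < ∞` -/
  n2_moment : ∫⁻ z, ENNReal.ofReal (z.1 + |z.2|) ∂n2 ≠ ⊤

/-- `Φ₁(λ) = -a₁₁λ₁ - αλ₁² - ∫ (e^{-⟨λ,z⟩} - 1 + λ₁z₁) n₁(dz)`. -/
def mPhi1 (B : BranchingMechanism) (l : ℝ × ℝ) : ℝ :=
  -B.a11 * l.1 - B.alpha * l.1 ^ 2 -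
    ∫ z, (Real.exp (-(l.1 * z.1 + l.2 * z.2)) - 1 + l.1 * z.1) ∂B.n1

/-- `Φ₂(λ) = a₂₁λ₁ + ∫ (1 - e^{-⟨λ,z⟩}) n₂(dz)`. -/
def mPhi2 (B : BranchingMechanism) (l : ℝ × ℝ) : ℝ :=
  B.a21 * l.1 + ∫ z, (1 - Real.exp (-(l.1 * z.1 + l.2 * z.2))) ∂B.n2


/-- `V : t ↦ V(t,λ)` is a continuous `[0,∞)²`-valued solution of the cumulant
equations (3.8) with initial value `λ = l`. -/
def SolvesCumulant (B : BranchingMechanism) (l : ℝ × ℝ) (V : ℝ → ℝ × ℝ) : Prop :=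
  ContinuousOn V (Ici 0) ∧
  (∀ t : ℝ, 0 ≤ t → 0 ≤ (V t).1 ∧ 0 ≤ (V t).2) ∧
  (∀ t : ℝ, 0 ≤ t →
    (V t).1 = l.1 + ∫ s in (0:ℝ)..t, mPhi1 B (V s) ∧
    (V t).2 = l.2 + ∫ s in (0:ℝ)..t, mPhi2 B (V s))

/-- Entries of the moment matrix `H`. -/
def H11 (B : BranchingMechanism) : ℝ := -B.a11
def H12 (B : BranchingMechanism) : ℝ := ∫ z, z.2 ∂B.n1
def H21 (B : BranchingMechanism) : ℝ := B.a21 + ∫ z, z.1 ∂B.n2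
def H22 (B : BranchingMechanism) : ℝ := ∫ z, z.2 ∂B.n2

/-- The moment matrix `H` of a branching mechanism. -/
def Hmat (B : BranchingMechanism) : Matrix (Fin 2) (Fin 2) ℝ :=
  !![H11 B, H12 B; H21 B, H22 B]

lemma aux_ae1 (B : BranchingMechanism) : ∀ᵐ z ∂B.n1, 0 ≤ z.1 ∧ 0 ≤ z.2 := by
  have h : ∀ᵐ z ∂B.n1, z ∈ Mset := by
    rw [ae_iff]; exact B.n1_supp
  filter_upwards [h] with z hz
  obtain ⟨h1, n, hn⟩ := hz
  exact ⟨h1, by rw [hn]; positivity⟩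

lemma aux_ae2 (B : BranchingMechanism) : ∀ᵐ z ∂B.n2, 0 ≤ z.1 ∧ (0 ≤ z.2 ∨ z.2 = -1) := by
  have h : ∀ᵐ z ∂B.n2, z ∈ Mm1set := by
    rw [ae_iff]; exact B.n2_supp
  filter_upwards [h] with z hz
  obtain ⟨h1, n, hn, hz⟩ := hz
  refine ⟨h1, ?_⟩
  rcases eq_or_lt_of_le hn with h | h
  · right; rw [hz, ← h]; norm_num
  · left; rw [hz]; exact_mod_cast (by omega : 0 ≤ n)

lemma aux_int1 (B : BranchingMechanism) :
    Integrable (fun z : ℝ × ℝ => min z.1 (z.1 ^ 2) + z.2) B.n1 := by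
  have hm : Measurable (fun z : ℝ × ℝ => min z.1 (z.1 ^ 2) + z.2) := by fun_prop
  refine ⟨hm.aestronglyMeasurable, ?_⟩
  rw [hasFiniteIntegral_iff_ofReal]
  · exact lt_top_iff_ne_top.mpr B.n1_moment
  · filter_upwards [aux_ae1 B] with z hz
    have := hz.1
    have := hz.2
    simp only [Pi.zero_apply]
    positivity

lemma aux_int2 (B : BranchingMechanism) :
    Integrable (fun z : ℝ × ℝ => z.1 + |z.2|) B.n2 := by
  have hm : Measurable (fun z : ℝ × ℝ => z.1 + |z.2|) := by fun_prop
  refine ⟨hm.aestronglyMeasurable, ?_⟩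
  rw [hasFiniteIntegral_iff_ofReal]
  · exact lt_top_iff_ne_top.mpr B.n2_moment
  · filter_upwards [aux_ae2 B] with z hz
    have := hz.1
    simp only [Pi.zero_apply]
    positivity

lemma aux_int1_snd (B : BranchingMechanism) : Integrable (fun z : ℝ × ℝ => z.2) B.n1 := by
  refine (aux_int1 B).mono' measurable_snd.aestronglyMeasurable ?_
  filter_upwards [aux_ae1 B] with z hz
  rw [Real.norm_eq_abs, abs_of_nonneg hz.2]
  have : 0 ≤ min z.1 (z.1 ^ 2) := le_min hz.1 (sq_nonneg _)
  linarith

lemma aux_int2_fst (B : BranchingMechanism) : Integrable (fun z : ℝ × ℝ => z.1) B.n2 := by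
  refine (aux_int2 B).mono' measurable_fst.aestronglyMeasurable ?_
  filter_upwards [aux_ae2 B] with z hz
  rw [Real.norm_eq_abs, abs_of_nonneg hz.1]
  have := abs_nonneg z.2
  linarith

lemma aux_int2_snd (B : BranchingMechanism) : Integrable (fun z : ℝ × ℝ => z.2) B.n2 := by
  refine (aux_int2 B).mono' measurable_snd.aestronglyMeasurable ?_
  filter_upwards [aux_ae2 B] with z hz
  rw [Real.norm_eq_abs]
  linarith [hz.1]

lemma aux_exp_quad {y : ℝ} (hy : 0 ≤ y) : Real.exp (-y) ≤ 1 - y + y ^ 2 := by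
  have h1 := Real.add_one_le_exp y
  have h2 : Real.exp (-y) * Real.exp y = 1 := by rw [← Real.exp_add]; simp
  have h3 := Real.exp_pos (-y)
  have h4 : Real.exp (-y) * (y + 1) ≤ 1 := by nlinarith
  have h5 : 1 ≤ (1 - y + y ^ 2) * (y + 1) := by nlinarith [pow_nonneg hy 3]
  exact le_of_mul_le_mul_right (h4.trans h5) (by linarith)

lemma aux_bound1 {R a b x y : ℝ} (ha : 0 ≤ a) (hb : 0 ≤ b) (haR : a ≤ R) (hbR : b ≤ R)
    (hx : 0 ≤ x) (hy : 0 ≤ y) :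
    |Real.exp (-(a * x + b * y)) - 1 + a * x| ≤ (R + R ^ 2) * (min x (x ^ 2) + y) := by
  have hax : 0 ≤ a * x := mul_nonneg ha hx
  have hby : 0 ≤ b * y := mul_nonneg hb hy
  have h1 := Real.one_sub_le_exp_neg (a * x + b * y)
  have h2 : Real.exp (-(a * x + b * y)) ≤ Real.exp (-(a * x)) :=
    Real.exp_le_exp.mpr (by linarith)
  have h3 := aux_exp_quad hax
  have h4 : Real.exp (-(a * x)) ≤ 1 := Real.exp_le_one_iff.mpr (by linarith)
  have hR : 0 ≤ R := ha.trans haR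
  have hm : 0 ≤ min x (x ^ 2) := le_min hx (sq_nonneg _)
  have hby' : b * y ≤ R * y := mul_le_mul_of_nonneg_right hbR hy
  have hax' : a * x ≤ R * x := mul_le_mul_of_nonneg_right haR hx
  have hax2 : (a * x) ^ 2 ≤ R ^ 2 * x ^ 2 := by
    rw [← mul_pow]; exact pow_le_pow_left₀ hax hax' 2
  have hRy : 0 ≤ R ^ 2 * y := by positivity
  have hRy' : 0 ≤ R * y := by positivity
  have key : Real.exp (-(a * x)) - 1 + a * x ≤ (R + R ^ 2) * min x (x ^ 2) := by
    rcases min_choice x (x ^ 2) with h | h <;> rw [h]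
    · have : 0 ≤ R ^ 2 * x := by positivity
      linarith
    · have : 0 ≤ R * x ^ 2 := by positivity
      linarith
  have hmm : 0 ≤ (R + R ^ 2) * min x (x ^ 2) := by positivity
  rw [abs_le]
  constructor <;> linarith

lemma aux_bound2 {R a b x y : ℝ} (ha : 0 ≤ a) (hb : 0 ≤ b) (haR : a ≤ R) (hbR : b ≤ R)
    (hx : 0 ≤ x) (hy : 0 ≤ y ∨ y = -1) :
    |1 - Real.exp (-(a * x + b * y))| ≤ (R + 1 + Real.exp R) * (x + |y|) := by
  have hax : 0 ≤ a * x := mul_nonneg ha hx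
  have hR : 0 ≤ R := ha.trans haR
  have hax' : a * x ≤ R * x := mul_le_mul_of_nonneg_right haR hx
  have hE := Real.exp_pos R
  have hp := Real.exp_pos (-(a * x + b * y))
  rcases hy with hy | hy
  · have hby : 0 ≤ b * y := mul_nonneg hb hy
    have hby' : b * y ≤ R * y := mul_le_mul_of_nonneg_right hbR hy
    have h1 := Real.one_sub_le_exp_neg (a * x + b * y)
    have h4 : Real.exp (-(a * x + b * y)) ≤ 1 := Real.exp_le_one_iff.mpr (by linarith)
    rw [abs_of_nonneg hy, abs_of_nonneg (by linarith)]
    have : 0 ≤ (1 + Real.exp R) * (x + y) := by positivity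
    linarith
  · subst hy
    have h2 : Real.exp (-(a * x + b * (-1))) ≤ Real.exp R := Real.exp_le_exp.mpr (by linarith)
    have : 0 ≤ (R + 1 + Real.exp R) * x := by positivity
    norm_num only [abs_neg, abs_one]
    rw [abs_le]
    constructor <;> nlinarith

lemma aux_integrable2 (B : BranchingMechanism) {a b : ℝ} (ha : 0 ≤ a) (hb : 0 ≤ b) :
    Integrable (fun z : ℝ × ℝ => 1 - Real.exp (-(a * z.1 + b * z.2))) B.n2 := by
  refine ((aux_int2 B).const_mul (max a b + 1 + Real.exp (max a b))).mono' ?_ ?_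
  · exact Measurable.aestronglyMeasurable (by fun_prop)
  · filter_upwards [aux_ae2 B] with z hz
    exact aux_bound2 ha hb (le_max_left _ _) (le_max_right _ _) hz.1 hz.2

lemma aux_integrable1 (B : BranchingMechanism) {a b : ℝ} (ha : 0 ≤ a) (hb : 0 ≤ b) :
    Integrable (fun z : ℝ × ℝ => Real.exp (-(a * z.1 + b * z.2)) - 1 + a * z.1) B.n1 := by
  refine ((aux_int1 B).const_mul (max a b + (max a b) ^ 2)).mono' ?_ ?_
  · exact Measurable.aestronglyMeasurable (by fun_prop)
  · filter_upwards [aux_ae1 B] with z hz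
    exact aux_bound1 ha hb (le_max_left _ _) (le_max_right _ _) hz.1 hz.2

lemma aux_phi1_le (B : BranchingMechanism) {l : ℝ × ℝ} (h1 : 0 ≤ l.1) (h2 : 0 ≤ l.2) :
    mPhi1 B l ≤ H11 B * l.1 + H12 B * l.2 := by
  unfold mPhi1 H11 H12
  have : ∫ z, -(l.2 * z.2) ∂B.n1
      ≤ ∫ z, (Real.exp (-(l.1 * z.1 + l.2 * z.2)) - 1 + l.1 * z.1) ∂B.n1 := by
    refine integral_mono ((aux_int1_snd B).const_mul l.2).neg (aux_integrable1 B h1 h2) ?_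
    intro z
    have := Real.one_sub_le_exp_neg (l.1 * z.1 + l.2 * z.2)
    simp only
    linarith
  rw [integral_neg, integral_const_mul] at this
  have h3 := mul_nonneg B.alpha_nonneg (sq_nonneg l.1)
  linarith

lemma aux_phi2_le (B : BranchingMechanism) {l : ℝ × ℝ} (h1 : 0 ≤ l.1) (h2 : 0 ≤ l.2) :
    mPhi2 B l ≤ H21 B * l.1 + H22 B * l.2 := by
  unfold mPhi2 H21 H22
  have : ∫ z, (1 - Real.exp (-(l.1 * z.1 + l.2 * z.2))) ∂B.n2
      ≤ ∫ z, (l.1 * z.1 + l.2 * z.2) ∂B.n2 := by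
    refine integral_mono (aux_integrable2 B h1 h2)
      (((aux_int2_fst B).const_mul l.1).add ((aux_int2_snd B).const_mul l.2)) ?_
    intro z
    have := Real.one_sub_le_exp_neg (l.1 * z.1 + l.2 * z.2)
    simp only
    linarith
  rw [integral_add ((aux_int2_fst B).const_mul l.1) ((aux_int2_snd B).const_mul l.2),
    integral_const_mul, integral_const_mul] at this
  linarith

lemma aux_bdd {U : ℝ → ℝ × ℝ} {T : ℝ} (hU : ContinuousOn U (Icc 0 T)) :
    ∃ R, ∀ s ∈ Icc 0 T, (U s).1 ≤ R ∧ (U s).2 ≤ R := by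
  obtain ⟨R, hR⟩ := isCompact_Icc.exists_bound_of_continuousOn hU
  refine ⟨R, fun s hs => ?_⟩
  have := hR s hs
  rw [Prod.norm_def] at this
  exact ⟨(le_abs_self _).trans ((le_max_left _ _).trans this),
    (le_abs_self _).trans ((le_max_right _ _).trans this)⟩

lemma aux_cont1 (B : BranchingMechanism) {U : ℝ → ℝ × ℝ} {T : ℝ}
    (hU : ContinuousOn U (Icc 0 T)) (hpos : ∀ s ∈ Icc 0 T, 0 ≤ (U s).1 ∧ 0 ≤ (U s).2) :
    ContinuousOn (fun s => mPhi1 B (U s)) (Icc 0 T) := by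
  obtain ⟨R, hR⟩ := aux_bdd hU
  unfold mPhi1
  have hU1 : ContinuousOn (fun s => (U s).1) (Icc 0 T) := continuous_fst.comp_continuousOn hU
  have hU2 : ContinuousOn (fun s => (U s).2) (Icc 0 T) := continuous_snd.comp_continuousOn hU
  refine ContinuousOn.sub (by fun_prop) ?_
  refine continuousOn_of_dominated (bound := fun z => (R + R ^ 2) * (min z.1 (z.1 ^ 2) + z.2))
    ?_ ?_ ((aux_int1 B).const_mul _) ?_
  · intro s _
    exact Measurable.aestronglyMeasurable (by fun_prop)
  · intro s hs
    filter_upwards [aux_ae1 B] with z hz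
    exact aux_bound1 (hpos s hs).1 (hpos s hs).2 (hR s hs).1 (hR s hs).2 hz.1 hz.2
  · refine Eventually.of_forall fun z => ?_
    fun_prop

lemma aux_cont2 (B : BranchingMechanism) {U : ℝ → ℝ × ℝ} {T : ℝ}
    (hU : ContinuousOn U (Icc 0 T)) (hpos : ∀ s ∈ Icc 0 T, 0 ≤ (U s).1 ∧ 0 ≤ (U s).2) :
    ContinuousOn (fun s => mPhi2 B (U s)) (Icc 0 T) := by
  obtain ⟨R, hR⟩ := aux_bdd hU
  unfold mPhi2
  have hU1 : ContinuousOn (fun s => (U s).1) (Icc 0 T) := continuous_fst.comp_continuousOn hU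
  have hU2 : ContinuousOn (fun s => (U s).2) (Icc 0 T) := continuous_snd.comp_continuousOn hU
  refine ContinuousOn.add (by fun_prop) ?_
  refine continuousOn_of_dominated (bound := fun z => (R + 1 + Real.exp R) * (z.1 + |z.2|))
    ?_ ?_ ((aux_int2 B).const_mul _) ?_
  · intro s _
    exact Measurable.aestronglyMeasurable (by fun_prop)
  · intro s hs
    filter_upwards [aux_ae2 B] with z hz
    exact aux_bound2 (hpos s hs).1 (hpos s hs).2 (hR s hs).1 (hR s hs).2 hz.1 hz.2
  · refine Eventually.of_forall fun z => ?_
    fun_prop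

lemma aux_deriv {v g : ℝ → ℝ} {v0 T : ℝ} (hg : ContinuousOn g (Icc 0 T))
    (hv : ∀ t, 0 ≤ t → v t = v0 + ∫ s in (0:ℝ)..t, g s) {t : ℝ} (ht : t ∈ Ioo 0 T) :
    HasDerivAt v (g t) t := by
  have hnhds : Icc 0 T ∈ nhds t := Icc_mem_nhds ht.1 ht.2
  have h1 : HasDerivAt (fun u => ∫ s in (0:ℝ)..u, g s) (g t) t := by
    apply intervalIntegral.integral_hasDerivAt_right
    · apply ContinuousOn.intervalIntegrable
      rw [uIcc_of_le ht.1.le]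
      exact hg.mono (Icc_subset_Icc_right ht.2.le)
    · exact ContinuousOn.stronglyMeasurableAtFilter isOpen_Ioo (hg.mono Ioo_subset_Icc_self) t ht
    · exact hg.continuousAt hnhds
  refine (h1.const_add v0).congr_of_eventuallyEq ?_
  filter_upwards [hnhds] with u hu
  exact hv u hu.1

lemma aux_spec {a b c d : ℝ} (hb : 0 ≤ b) (hc : 0 ≤ c)
    (hspec : ∀ μ : ℂ, μ ∈ spectrum ℂ ((!![a, b; c, d]).map (Complex.ofReal ·)) → μ.re < 0) :
    a < 0 ∧ d < 0 ∧ 0 < a * d - b * c := by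
  have hD : 0 ≤ (a - d) ^ 2 + 4 * (b * c) := by positivity
  set r := Real.sqrt ((a - d) ^ 2 + 4 * (b * c)) with hr
  have hr0 : 0 ≤ r := Real.sqrt_nonneg _
  have hr2 : r ^ 2 = (a - d) ^ 2 + 4 * (b * c) := Real.sq_sqrt hD
  have h := hspec (((a + d + r) / 2 : ℝ) : ℂ) (by
    rw [Matrix.mem_spectrum_iff_isRoot_charpoly, Matrix.charpoly_fin_two]
    simp only [Polynomial.IsRoot.def, Polynomial.eval_add, Polynomial.eval_sub,
      Polynomial.eval_pow, Polynomial.eval_mul, Polynomial.eval_C, Polynomial.eval_X,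
      Matrix.trace_fin_two, Matrix.det_fin_two, Matrix.map_apply, Matrix.of_apply,
      Matrix.cons_val', Matrix.cons_val_zero, Matrix.cons_val_one, Matrix.cons_val_fin_one]
    norm_cast
    nlinarith)
  rw [Complex.ofReal_re] at h
  have h1 : a + d < -r := by linarith
  have hdet : 0 < a * d - b * c := by nlinarith
  have hbc : 0 ≤ b * c := mul_nonneg hb hc
  refine ⟨?_, ?_, hdet⟩
  · by_contra! ha
    nlinarith
  · by_contra! ha
    nlinarith

/-- If all eigenvalues of `H` have strictly negative real parts, then
there are `c, c₂ > 0` with `|V(t,λ)| ≤ c |λ| e^{-c₂ t}` for all `λ ∈ [0,∞)²` and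
`t ≥ 0` (Euclidean norms). -/
theorem cumulant_exponential_decay (B : BranchingMechanism)
    (V : ℝ → (ℝ × ℝ) → ℝ × ℝ)
    (hV : ∀ l : ℝ × ℝ, 0 ≤ l.1 → 0 ≤ l.2 → SolvesCumulant B l (fun t => V t l))
    (hspec : ∀ μ : ℂ, μ ∈ spectrum ℂ ((Hmat B).map (Complex.ofReal ·)) → μ.re < 0) :
    ∃ c : ℝ, 0 < c ∧ ∃ c₂ : ℝ, 0 < c₂ ∧
      ∀ l : ℝ × ℝ, 0 ≤ l.1 → 0 ≤ l.2 → ∀ t : ℝ, 0 ≤ t →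
        Real.sqrt ((V t l).1 ^ 2 + (V t l).2 ^ 2)
          ≤ c * Real.sqrt (l.1 ^ 2 + l.2 ^ 2) * Real.exp (-c₂ * t) := by
  have hb : 0 ≤ H12 B := by
    refine integral_nonneg_of_ae ?_
    filter_upwards [aux_ae1 B] with z hz using hz.2
  have hc : 0 ≤ H21 B := by
    refine add_nonneg B.a21_nonneg (integral_nonneg_of_ae ?_)
    filter_upwards [aux_ae2 B] with z hz using hz.1
  obtain ⟨ha, hd, hdet⟩ := aux_spec hb hc hspec
  obtain ⟨w1, hw1⟩ : ∃ w1, w1 = H21 B - H22 B := ⟨_, rfl⟩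
  obtain ⟨w2, hw2⟩ : ∃ w2, w2 = H12 B - H11 B := ⟨_, rfl⟩
  obtain ⟨D, hD⟩ : ∃ D, D = H11 B * H22 B - H12 B * H21 B := ⟨_, rfl⟩
  rw [← hD] at hdet
  have hw1p : 0 < w1 := by linarith
  have hw2p : 0 < w2 := by linarith
  have e1 : w1 * H11 B + w2 * H21 B = -D := by rw [hw1, hw2, hD]; ring
  have e2 : w1 * H12 B + w2 * H22 B = -D := by rw [hw1, hw2, hD]; ring
  obtain ⟨k, hk⟩ : ∃ k, k = D / (w1 + w2) := ⟨_, rfl⟩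
  have hkp : 0 < k := by rw [hk]; positivity
  have hkD : k * (w1 + w2) = D := by rw [hk]; field_simp
  have hmp : 0 < min w1 w2 := lt_min hw1p hw2p
  refine ⟨2 * (w1 + w2) / min w1 w2, by positivity, k, hkp, ?_⟩
  intro l hl1 hl2 T hT
  obtain ⟨hcont, hpos, heq⟩ := hV l hl1 hl2
  simp only at hcont hpos heq
  have hcT : ContinuousOn (fun t => V t l) (Icc 0 T) := hcont.mono Icc_subset_Ici_self
  have hpT : ∀ s ∈ Icc 0 T, 0 ≤ (V s l).1 ∧ 0 ≤ (V s l).2 := fun s hs => hpos s hs.1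
  have g1 := aux_cont1 B hcT hpT
  have g2 := aux_cont2 B hcT hpT
  have hV1 : ContinuousOn (fun s => (V s l).1) (Icc 0 T) := continuous_fst.comp_continuousOn hcT
  have hV2 : ContinuousOn (fun s => (V s l).2) (Icc 0 T) := continuous_snd.comp_continuousOn hcT
  have hder : ∀ t ∈ Ioo 0 T, HasDerivAt
      (fun s => Real.exp (k * s) * (w1 * (V s l).1 + w2 * (V s l).2))
      (Real.exp (k * t) * (k * 1) * (w1 * (V t l).1 + w2 * (V t l).2)
        + Real.exp (k * t) * (w1 * mPhi1 B (V t l) + w2 * mPhi2 B (V t l))) t := by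
    intro t ht
    have d1 := aux_deriv g1 (fun t ht => (heq t ht).1) ht
    have d2 := aux_deriv g2 (fun t ht => (heq t ht).2) ht
    exact (((hasDerivAt_id t).const_mul k).exp).mul ((d1.const_mul w1).add (d2.const_mul w2))
  have hanti : AntitoneOn (fun s => Real.exp (k * s) * (w1 * (V s l).1 + w2 * (V s l).2))
      (Icc 0 T) := by
    apply antitoneOn_of_deriv_nonpos (convex_Icc 0 T)
    · fun_prop
    · rw [interior_Icc]
      exact fun t ht => (hder t ht).differentiableAt.differentiableWithinAt
    · rw [interior_Icc]
      intro t ht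
      rw [(hder t ht).deriv]
      obtain ⟨p1, p2⟩ := hpos t ht.1.le
      have q1 := mul_le_mul_of_nonneg_left (aux_phi1_le B p1 p2) hw1p.le
      have q2 := mul_le_mul_of_nonneg_left (aux_phi2_le B p1 p2) hw2p.le
      have q3 : w1 * mPhi1 B (V t l) + w2 * mPhi2 B (V t l)
          ≤ -D * (V t l).1 + -D * (V t l).2 := by
        calc _ ≤ _ := add_le_add q1 q2
          _ = (w1 * H11 B + w2 * H21 B) * (V t l).1
              + (w1 * H12 B + w2 * H22 B) * (V t l).2 := by ring
          _ = _ := by rw [e1, e2]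
      have q4 : k * (w1 * (V t l).1 + w2 * (V t l).2)
          + (w1 * mPhi1 B (V t l) + w2 * mPhi2 B (V t l)) ≤ 0 := by
        have r1 : 0 ≤ k * w2 * (V t l).1 := by positivity
        have r2 : 0 ≤ k * w1 * (V t l).2 := by positivity
        rw [← hkD] at q3
        linarith
      have q5 := mul_nonpos_of_nonneg_of_nonpos (Real.exp_pos (k * t)).le q4
      linarith
  have hfin := hanti (left_mem_Icc.mpr hT) (right_mem_Icc.mpr hT) hT
  have h01 : (V 0 l).1 = l.1 := by simpa using (heq 0 le_rfl).1
  have h02 : (V 0 l).2 = l.2 := by simpa using (heq 0 le_rfl).2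
  simp only [h01, h02, mul_zero, Real.exp_zero, one_mul] at hfin
  obtain ⟨p1, p2⟩ := hpos T hT
  have hE : Real.exp (k * T) * Real.exp (-k * T) = 1 := by rw [← Real.exp_add]; simp
  have hEp := Real.exp_pos (-k * T)
  have hL : w1 * (V T l).1 + w2 * (V T l).2 ≤ (w1 * l.1 + w2 * l.2) * Real.exp (-k * T) := by
    have := mul_le_mul_of_nonneg_right hfin hEp.le
    calc _ = (Real.exp (k * T) * Real.exp (-k * T)) * (w1 * (V T l).1 + w2 * (V T l).2) := by
          rw [hE, one_mul]
      _ = _ := by ring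
      _ ≤ _ := this
  have s1 : Real.sqrt ((V T l).1 ^ 2 + (V T l).2 ^ 2) ≤ (V T l).1 + (V T l).2 := by
    apply Real.sqrt_le_iff.mpr
    constructor
    · positivity
    · nlinarith [mul_nonneg p1 p2]
  have s2 : l.1 ≤ Real.sqrt (l.1 ^ 2 + l.2 ^ 2) :=
    Real.le_sqrt_of_sq_le (by nlinarith [sq_nonneg l.2])
  have s3 : l.2 ≤ Real.sqrt (l.1 ^ 2 + l.2 ^ 2) :=
    Real.le_sqrt_of_sq_le (by nlinarith [sq_nonneg l.1])
  have s4 : min w1 w2 * ((V T l).1 + (V T l).2) ≤ w1 * (V T l).1 + w2 * (V T l).2 := by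
    have := mul_le_mul_of_nonneg_right (min_le_left w1 w2) p1
    have := mul_le_mul_of_nonneg_right (min_le_right w1 w2) p2
    linarith
  set S := Real.sqrt (l.1 ^ 2 + l.2 ^ 2) with hS
  have hS0 : 0 ≤ S := Real.sqrt_nonneg _
  have s5 : w1 * l.1 + w2 * l.2 ≤ 2 * (w1 + w2) * S := by
    have t1 := mul_le_mul_of_nonneg_left s2 hw1p.le
    have t2 := mul_le_mul_of_nonneg_left s3 hw2p.le
    have t3 : 0 ≤ (w1 + w2) * S := by positivity
    linarith
  have s6 := mul_le_mul_of_nonneg_right s5 hEp.le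
  have s7 : (V T l).1 + (V T l).2 ≤ 2 * (w1 + w2) * S * Real.exp (-k * T) / min w1 w2 := by
    rw [le_div_iff₀ hmp]
    linarith
  calc _ ≤ _ := s1
    _ ≤ _ := s7
    _ = _ := by ring
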